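/- arXiv:2110.04059 — 2 statements merged into one kernel-verified Lean document; each statement's English description precedes it below -/
import Mathlib

section
/- Let α > -1/2, t ∈ ℝ, let τ ∈ ℝ[X] have no zeros on [-1,1], and let π_i, π_m ∈ ℝ[X]. Define W^{(α)}_τ(z) = (1-z²)^{α-1/2}/τ(z)², ρ_{ab}(z) = ∫_{-1}^{z} π_a(u)·π_b(u)·W^{(α)}_τ(u) du, ν_i = ρ_{ii}(1), ν_m = ρ_{mm}(1), τ_m = τ·(1 + t·ρ_{mm}), π_{m;i} = (1 + t·ρ_{mm})·π_i - t·ρ_{im}·π_m, and W^{(α)}_{τ_m}(z) = (1-z²)^{α-1/2}/τ_m(z)². Assume 1 + t·ν_m > 0. If i ≠ m and ∫_{-1}^{1} π_i·π_m·W^{(α)}_τ = 0, then ∫_{-1}^{1} π_{m;i}(z)²·W^{(α)}_{τ_m}(z) dz = ν_i. Moreover, for i = m, ∫_{-1}^{1} π_{m;m}(z)²·W^{(α)}_{τ_m}(z) dz = ν_m/(1 + t·ν_m). In particular, the reciprocal norms satisfy ν_{m;i}⁻¹ = ν_i⁻¹ + δ_{im}·t. -/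
/-- The weight `W^{(α)}_τ(z) = (1-z²)^{α-1/2}/τ(z)²`. -/
noncomputable def gegenWeight (α : ℝ) (τ : Polynomial ℝ) (z : ℝ) : ℝ :=
  (1 - z ^ 2) ^ (α - 1/2 : ℝ) / (τ.eval z) ^ 2

/-- `ρ_{ab}(z) = ∫_{-1}^z π_a π_b W^{(α)}_τ`. -/
noncomputable def rhoInt (α : ℝ) (τ pa pb : Polynomial ℝ) (z : ℝ) : ℝ :=
  ∫ u in (-1 : ℝ)..z, pa.eval u * pb.eval u * gegenWeight α τ u

/-- The transformed τ-function `τ_m = τ(1 + tρ_{mm})`. -/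
noncomputable def tauCDT (α : ℝ) (τ πm : Polynomial ℝ) (t : ℝ) (z : ℝ) : ℝ :=
  τ.eval z * (1 + t * rhoInt α τ πm πm z)

/-- The transformed eigenfunction `π_{m;i} = (1 + tρ_{mm})π_i - tρ_{im}π_m`. -/
noncomputable def piCDT (α : ℝ) (τ πm πi : Polynomial ℝ) (t : ℝ) (z : ℝ) : ℝ :=
  (1 + t * rhoInt α τ πm πm z) * πi.eval z - t * rhoInt α τ πi πm z * πm.eval z

/-- The transformed weight `W^{(α)}_{τ_m}(z) = (1-z²)^{α-1/2}/τ_m(z)²`. -/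
noncomputable def gegenWeightCDT (α : ℝ) (τ πm : Polynomial ℝ) (t : ℝ) (z : ℝ) : ℝ :=
  (1 - z ^ 2) ^ (α - 1/2 : ℝ) / (tauCDT α τ πm t z) ^ 2

/-!
With `ρ_{ab}` the primitive of `π_a π_b W`, the function `ρ_{ii} - t ρ_{im}² / (1 + t ρ_{mm})` has
derivative `(π_i - t ρ_{im} π_m / (1 + t ρ_{mm}))² W`, and this is exactly `π_{m;i}² W_{τ_m}`. All
the norms are therefore read off from the value of this one primitive at the right endpoint.
For an arbitrary integrable weight the primitives are only absolutely continuous, and the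
fundamental theorem of calculus is applied in its almost-everywhere form.
-/

open MeasureTheory Set Filter intervalIntegral
open scoped Interval NNReal

section AbsolutelyContinuous

variable {a b : ℝ}

lemma absolutelyContinuousOnInterval_comp_of_lipschitzOnWith {X Y : Type*} [PseudoMetricSpace X]
    [PseudoMetricSpace Y] {f : ℝ → X} {φ : X → Y} {K : ℝ≥0}
    (hφ : LipschitzOnWith K φ (f '' [[a, b]])) (hf : AbsolutelyContinuousOnInterval f a b) :
    AbsolutelyContinuousOnInterval (fun x => φ (f x)) a b := by
  refine squeeze_zero' (Eventually.of_forall fun _ => Finset.sum_nonneg fun _ _ => dist_nonneg)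
    ?_ (by simpa only [mul_zero] using Tendsto.const_mul (K : ℝ) hf)
  filter_upwards [mem_inf_of_right (mem_principal_self _)] with E hE
  rw [Finset.mul_sum]
  exact Finset.sum_le_sum fun i hi => hφ.dist_le_mul _ (mem_image_of_mem f (hE.1 i hi).1)
    _ (mem_image_of_mem f (hE.1 i hi).2)

lemma lipschitzOnWith_inv {𝕜 : Type*} [NormedDivisionRing 𝕜] {s : Set 𝕜} {C : ℝ≥0}
    (hs : ∀ x ∈ s, x ≠ 0) (hC : ∀ x ∈ s, ‖x⁻¹‖ ≤ C) :
    LipschitzOnWith (C * C) (fun x => x⁻¹) s :=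
  LipschitzOnWith.of_dist_le_mul fun x hx y hy => by
    rw [dist_inv_inv₀ (hs x hx) (hs y hy), div_eq_inv_mul, mul_inv, ← norm_inv, ← norm_inv,
      NNReal.coe_mul]
    gcongr
    exacts [hC x hx, hC y hy]

lemma absolutelyContinuousOnInterval_inv {𝕜 : Type*} [NormedDivisionRing 𝕜] {f : ℝ → 𝕜}
    (hf : AbsolutelyContinuousOnInterval f a b) (hne : ∀ x ∈ [[a, b]], f x ≠ 0) :
    AbsolutelyContinuousOnInterval (fun x => (f x)⁻¹) a b := by
  obtain ⟨C, hC⟩ := isCompact_uIcc.exists_bound_of_continuousOn (hf.continuousOn.inv₀ hne)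
  lift C to ℝ≥0 using (norm_nonneg _).trans (hC a left_mem_uIcc)
  exact absolutelyContinuousOnInterval_comp_of_lipschitzOnWith
    (lipschitzOnWith_inv (forall_mem_image.2 hne) (forall_mem_image.2 hC)) hf

lemma integral_eq_sub_of_ae_hasDerivAt {f f' : ℝ → ℝ}
    (hf : AbsolutelyContinuousOnInterval f a b)
    (hderiv : ∀ᵐ x, x ∈ [[a, b]] → HasDerivAt f (f' x) x) :
    ∫ x in a..b, f' x = f b - f a := by
  rw [← hf.integral_deriv_eq_sub]
  refine integral_congr_ae ?_
  filter_upwards [hderiv] with x hx hxab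
  exact (hx (uIoc_subset_uIcc hxab)).deriv.symm

end AbsolutelyContinuous

section ConfluentDarboux

/-- The running inner product `ρ_{fg}(z) = ∫_a^z f g w` of `f` and `g` for the weight `w`, based at
the left endpoint `a` of the interval of orthogonality. -/
noncomputable def runningInner (a : ℝ) (w f g : ℝ → ℝ) (z : ℝ) : ℝ :=
  ∫ u in a..z, f u * g u * w u

/-- The confluent Darboux transform `(1 + tρ_{gg}) f - tρ_{fg} g` of `f` at the seed function `g`,
with parameter `t`. -/
noncomputable def confluentDarboux (a : ℝ) (w : ℝ → ℝ) (t : ℝ) (g f : ℝ → ℝ) (z : ℝ) : ℝ :=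
  (1 + t * runningInner a w g g z) * f z - t * runningInner a w f g z * g z

/-- The confluent Darboux transform `w / (1 + tρ_{gg})²` of the weight `w` at the seed function `g`,
with parameter `t`. A `τ`-function in the denominator of `w` is thereby multiplied by
`1 + tρ_{gg}`. -/
noncomputable def confluentDarbouxWeight (a : ℝ) (w : ℝ → ℝ) (t : ℝ) (g : ℝ → ℝ) (z : ℝ) : ℝ :=
  w z / (1 + t * runningInner a w g g z) ^ 2

variable {a b t : ℝ} {w f g : ℝ → ℝ}

lemma absolutelyContinuousOnInterval_runningInner
    (hfg : IntervalIntegrable (fun z => f z * g z * w z) volume a b) :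
    AbsolutelyContinuousOnInterval (runningInner a w f g) a b :=
  hfg.absolutelyContinuousOnInterval_intervalIntegral left_mem_uIcc

lemma ae_hasDerivAt_runningInner
    (hfg : IntervalIntegrable (fun z => f z * g z * w z) volume a b) :
    ∀ᵐ z, z ∈ [[a, b]] → HasDerivAt (runningInner a w f g) (f z * g z * w z) z := by
  filter_upwards [hfg.ae_hasDerivAt_integral] with z hz hzab
  exact hz hzab a left_mem_uIcc

lemma monotoneOn_runningInner_self (hw : ∀ u ∈ Icc a b, 0 ≤ w u)
    (hgg : IntervalIntegrable (fun u => g u * g u * w u) volume a b) :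
    MonotoneOn (runningInner a w g g) (Icc a b) := by
  intro x hx y hy hxy
  have hsub : Icc a y ⊆ Icc a b := Icc_subset_Icc_right hy.2
  refine integral_mono_interval le_rfl hx.1 hxy ?_ (hgg.mono_set ?_)
  · filter_upwards [ae_restrict_mem measurableSet_Ioc] with u hu
    exact mul_nonneg (mul_self_nonneg _) (hw u (hsub (Ioc_subset_Icc_self hu)))
  · rwa [uIcc_of_le hy.1, uIcc_of_le (hy.1.trans hy.2)]

lemma one_add_mul_runningInner_self_pos (hw : ∀ u ∈ Icc a b, 0 ≤ w u)
    (hgg : IntervalIntegrable (fun u => g u * g u * w u) volume a b)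
    (hpos : 0 < 1 + t * runningInner a w g g b) {z : ℝ} (hz : z ∈ Icc a b) :
    0 < 1 + t * runningInner a w g g z := by
  have hab : a ≤ b := hz.1.trans hz.2
  have ρ_mono := monotoneOn_runningInner_self hw hgg
  have ρ_nonneg : 0 ≤ runningInner a w g g z := by
    simpa only [runningInner, integral_same] using ρ_mono (left_mem_Icc.2 hab) hz hz.1
  have ρ_le : runningInner a w g g z ≤ runningInner a w g g b :=
    ρ_mono hz (right_mem_Icc.2 hab) hz.2
  rcases le_total 0 t with ht | ht
  · positivity
  · linarith [mul_le_mul_of_nonpos_left ρ_le ht]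

lemma confluentDarboux_sq_mul_confluentDarbouxWeight {z : ℝ}
    (hz : 1 + t * runningInner a w g g z ≠ 0) :
    confluentDarboux a w t g f z ^ 2 * confluentDarbouxWeight a w t g z =
      (f z - t * runningInner a w f g z * g z / (1 + t * runningInner a w g g z)) ^ 2 * w z := by
  unfold confluentDarboux confluentDarbouxWeight
  field_simp

theorem statement15_general (hff : IntervalIntegrable (fun z => f z * f z * w z) volume a b)
    (hfg : IntervalIntegrable (fun z => f z * g z * w z) volume a b)
    (hgg : IntervalIntegrable (fun z => g z * g z * w z) volume a b)
    (hne : ∀ z ∈ [[a, b]], 1 + t * runningInner a w g g z ≠ 0) :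
    ∫ z in a..b, confluentDarboux a w t g f z ^ 2 * confluentDarbouxWeight a w t g z =
      runningInner a w f f b
        - t * runningInner a w f g b ^ 2 / (1 + t * runningInner a w g g b) := by
  have ac_ff := absolutelyContinuousOnInterval_runningInner hff
  have ac_fg := absolutelyContinuousOnInterval_runningInner hfg
  have ac_gg := absolutelyContinuousOnInterval_runningInner hgg
  have ac_one : AbsolutelyContinuousOnInterval (fun _ => (1 : ℝ)) a b :=
    contDiffOn_const.absolutelyContinuousOnInterval
  have ac_inv := absolutelyContinuousOnInterval_inv (ac_one.fun_add (ac_gg.const_mul t)) hne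
  have ac_normSq : AbsolutelyContinuousOnInterval (fun z => runningInner a w f f z
      - t * runningInner a w f g z ^ 2 / (1 + t * runningInner a w g g z)) a b := by
    simpa only [div_eq_mul_inv, sq] using
      ac_ff.fun_sub (((ac_fg.fun_mul ac_fg).const_mul t).fun_mul ac_inv)
  rw [integral_eq_sub_of_ae_hasDerivAt ac_normSq]
  · simp [runningInner]
  · filter_upwards [ae_hasDerivAt_runningInner hff, ae_hasDerivAt_runningInner hfg,
      ae_hasDerivAt_runningInner hgg] with z deriv_ff deriv_fg deriv_gg hz
    have hne_z := hne z hz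
    rw [confluentDarboux_sq_mul_confluentDarbouxWeight hne_z]
    refine ((deriv_ff hz).fun_sub ((((deriv_fg hz).fun_pow 2).const_mul t).fun_div
      (((deriv_gg hz).const_mul t).const_add 1) hne_z)).congr_deriv ?_
    field_simp
    ring

end ConfluentDarboux

section Gegenbauer

lemma intervalIntegrable_one_sub_sq_rpow {s : ℝ} (hs : -1 < s) :
    IntervalIntegrable (fun z : ℝ => (1 - z ^ 2) ^ s) volume (-1) 1 := by
  have right : IntervalIntegrable (fun z : ℝ => (1 - z ^ 2) ^ s) volume 0 1 := by
    have singular_factor : IntervalIntegrable (fun z : ℝ => (1 - z) ^ s) volume 0 1 := by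
      simpa using ((intervalIntegrable_rpow' hs (a := 0) (b := 1)).comp_sub_left 1).symm
    have regular_factor : ContinuousOn (fun z : ℝ => (1 + z) ^ s) [[0, 1]] := by
      refine ContinuousOn.rpow_const (by fun_prop) fun z hz => Or.inl ?_
      rw [uIcc_of_le zero_le_one] at hz
      linarith [hz.1]
    refine (singular_factor.mul_continuousOn regular_factor).congr fun z hz => ?_
    rw [uIoc_of_le zero_le_one] at hz
    change (1 - z) ^ s * (1 + z) ^ s = (1 - z ^ 2) ^ s
    rw [← Real.mul_rpow (by linarith [hz.2]) (by linarith [hz.1])]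
    congr 1
    ring
  have left : IntervalIntegrable (fun z : ℝ => (1 - z ^ 2) ^ s) volume (-1) 0 := by
    simpa using (right.comp_sub_left 0).symm
  exact left.trans right

variable {α : ℝ} {τ : Polynomial ℝ}

lemma gegenWeight_nonneg {z : ℝ} (hz : z ∈ Icc (-1 : ℝ) 1) : 0 ≤ gegenWeight α τ z :=
  div_nonneg (Real.rpow_nonneg (by nlinarith [hz.1, hz.2]) _) (sq_nonneg _)

lemma intervalIntegrable_gegenWeight (hα : -1 / 2 < α) (hτ0 : ∀ z ∈ Icc (-1 : ℝ) 1, τ.eval z ≠ 0) :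
    IntervalIntegrable (gegenWeight α τ) volume (-1) 1 := by
  have hc : ContinuousOn (fun z => ((τ.eval z) ^ 2)⁻¹) [[-1, 1]] := by
    rw [uIcc_of_le (by norm_num)]
    exact ContinuousOn.inv₀ (by fun_prop) fun z hz => pow_ne_zero 2 (hτ0 z hz)
  exact ((intervalIntegrable_one_sub_sq_rpow (by linarith)).mul_continuousOn hc).congr
    fun z _ => (div_eq_mul_inv _ _).symm

lemma intervalIntegrable_eval_mul_eval_mul_gegenWeight (hα : -1 / 2 < α)
    (hτ0 : ∀ z ∈ Icc (-1 : ℝ) 1, τ.eval z ≠ 0) (p q : Polynomial ℝ) :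
    IntervalIntegrable (fun z => p.eval z * q.eval z * gegenWeight α τ z) volume (-1) 1 :=
  (intervalIntegrable_gegenWeight hα hτ0).continuousOn_mul (by fun_prop)

lemma gegenWeightCDT_eq_confluentDarbouxWeight (t : ℝ) (p : Polynomial ℝ) :
    gegenWeightCDT α τ p t = confluentDarbouxWeight (-1) (gegenWeight α τ) t (p.eval ·) := by
  funext z
  rw [gegenWeightCDT, tauCDT, mul_pow, ← div_div]
  rfl

lemma integral_piCDT_sq_mul_gegenWeightCDT (hα : -1 / 2 < α)
    (hτ0 : ∀ z ∈ Icc (-1 : ℝ) 1, τ.eval z ≠ 0) {t : ℝ} {q : Polynomial ℝ}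
    (hpos : 0 < 1 + t * rhoInt α τ q q 1) (p : Polynomial ℝ) :
    ∫ z in (-1 : ℝ)..1, piCDT α τ q p t z ^ 2 * gegenWeightCDT α τ q t z =
      rhoInt α τ p p 1 - t * rhoInt α τ p q 1 ^ 2 / (1 + t * rhoInt α τ q q 1) := by
  have hint := intervalIntegrable_eval_mul_eval_mul_gegenWeight hα hτ0
  rw [gegenWeightCDT_eq_confluentDarbouxWeight]
  refine statement15_general (hint p p) (hint p q) (hint q q) fun z hz => ?_
  rw [uIcc_of_le (by norm_num)] at hz
  exact (one_add_mul_runningInner_self_pos (fun _ => gegenWeight_nonneg) (hint q q) hpos hz).ne'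

end Gegenbauer

/-- the norms after a confluent Darboux transformation. If
`1 + tν_m > 0`, then for `i ≠ m` (with `π_i ⊥ π_m`) the squared norm of `π_{m;i}`
is still `ν_i`, while the squared norm of `π_{m;m}` is `ν_m/(1 + tν_m)`; i.e. the
reciprocal norms satisfy `ν_{m;i}⁻¹ = ν_i⁻¹ + δ_{im}t`. -/
theorem statement15 (α : ℝ) (hα : -1/2 < α) (t : ℝ) (τ πi πm : Polynomial ℝ)
    (hτ0 : ∀ z ∈ Set.Icc (-1 : ℝ) 1, τ.eval z ≠ 0)
    (hpos : 0 < 1 + t * rhoInt α τ πm πm 1) :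
    ((πi ≠ πm →
      (∫ z in (-1 : ℝ)..1, πi.eval z * πm.eval z * gegenWeight α τ z) = 0 →
      ∫ z in (-1 : ℝ)..1, (piCDT α τ πm πi t z) ^ 2 * gegenWeightCDT α τ πm t z
        = rhoInt α τ πi πi 1)) ∧
    (∫ z in (-1 : ℝ)..1, (piCDT α τ πm πm t z) ^ 2 * gegenWeightCDT α τ πm t z
      = rhoInt α τ πm πm 1 / (1 + t * rhoInt α τ πm πm 1)) := by
  have norm_formula := integral_piCDT_sq_mul_gegenWeightCDT hα hτ0 hpos
  refine ⟨fun _ (orthogonal : rhoInt α τ πi πm 1 = 0) => ?_, ?_⟩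
  · rw [norm_formula, orthogonal]
    simp
  · rw [norm_formula, sub_eq_iff_eq_add, ← add_div, eq_div_iff hpos.ne']
    ring
end

section
/- Let ℓ ∈ ℕ and α = ℓ + 1/2, t ∈ ℝ, let τ ∈ ℝ[X] be positive on [-1,1], and let {π_i}_{i∈ℕ} be polynomials satisfying: (orthogonality) ∫_{-1}^{1} π_i·π_j·W^{(α)}_τ = 0 for i ≠ j with ν_i := ∫_{-1}^{1} π_i²·W^{(α)}_τ > 0, and (completeness) every measurable g : [-1,1] → ℝ with ∫_{-1}^{1} g²·W^{(α)}_τ < ∞ and ∫_{-1}^{1} g·π_i·W^{(α)}_τ = 0 for all i ∈ ℕ vanishes almost everywhere on [-1,1]; here W^{(α)}_τ(z) = (1-z²)^{α-1/2}/τ(z)². Fix m ∈ ℕ with 1 + t·ν_m > 0, set ρ_{ab}(z) = ∫_{-1}^{z} π_a·π_b·W^{(α)}_τ, τ_m = τ·(1 + t·ρ_{mm}), π_{m;i} = (1 + t·ρ_{mm})·π_i - t·ρ_{im}·π_m, and W^{(α)}_{τ_m}(z) = (1-z²)^{α-1/2}/τ_m(z)². Then {π_{m;i}}_{i∈ℕ}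 is complete for W^{(α)}_{τ_m}: every measurable h : [-1,1] → ℝ with ∫_{-1}^{1} h²·W^{(α)}_{τ_m} < ∞ and ∫_{-1}^{1} h·π_{m;i}·W^{(α)}_{τ_m} = 0 for all i ∈ ℕ vanishes almost everywhere on [-1,1]. -/
/-!
With `q = p m`, write `s = 1 + t ∫_a^x q² w` for the Darboux factor, `W = w / s²` for the
transformed weight, and `T u = s u - t (∫_a^x u q w) q` for the transformation. Integration by parts
turns `∫ h (T u) W` into `∫ (T* h) u w`, where `T* h = h / s + t Φ q` and `Φ = ∫_b^x h q W`. Thus if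
`h` is orthogonal to every `T (p i)` with respect to `W`, then `T* h`, which lies in `L²(w)`, is
orthogonal to every `p i` with respect to `w`, and completeness gives `T* h = 0`. It remains to see
that `T*` is injective: if `h / s = -t Φ q`, then `s Φ' = (h / s) q w = -s' Φ`, so `s Φ` is
constant; it vanishes at `b`, hence `Φ = 0` and `h = 0`.
-/

open MeasureTheory

/-- The weight `W^{(α)}_τ(z) = (1-z²)^ℓ/τ(z)²` for `α = ℓ + 1/2`. -/
noncomputable def gegenWeightNat (ℓ : ℕ) (τ : Polynomial ℝ) (z : ℝ) : ℝ :=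
  (1 - z ^ 2) ^ ℓ / (τ.eval z) ^ 2

/-- `ρ_{ab}(z) = ∫_{-1}^z π_a π_b W^{(α)}_τ`. -/
noncomputable def rhoIntNat (ℓ : ℕ) (τ : Polynomial ℝ) (π : ℕ → Polynomial ℝ)
    (a b : ℕ) (z : ℝ) : ℝ :=
  ∫ u in (-1 : ℝ)..z, (π a).eval u * (π b).eval u * gegenWeightNat ℓ τ u

/-- The transformed τ-function `τ_m = τ(1 + tρ_{mm})`. -/
noncomputable def tauCDTNat (ℓ : ℕ) (τ : Polynomial ℝ) (π : ℕ → Polynomial ℝ)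
    (m : ℕ) (t : ℝ) (z : ℝ) : ℝ :=
  τ.eval z * (1 + t * rhoIntNat ℓ τ π m m z)

/-- The transformed polynomials `π_{m;i} = (1 + tρ_{mm})π_i - tρ_{im}π_m`. -/
noncomputable def piCDTNat (ℓ : ℕ) (τ : Polynomial ℝ) (π : ℕ → Polynomial ℝ)
    (m i : ℕ) (t : ℝ) (z : ℝ) : ℝ :=
  (1 + t * rhoIntNat ℓ τ π m m z) * (π i).eval z
    - t * rhoIntNat ℓ τ π i m z * (π m).eval z

/-- The transformed weight `W^{(α)}_{τ_m} = (1-z²)^ℓ/τ_m²`. -/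
noncomputable def gegenWeightCDTNat (ℓ : ℕ) (τ : Polynomial ℝ) (π : ℕ → Polynomial ℝ)
    (m : ℕ) (t : ℝ) (z : ℝ) : ℝ :=
  (1 - z ^ 2) ^ ℓ / (tauCDTNat ℓ τ π m t z) ^ 2

/-- Membership of `f` in the weighted space `L²(w dμ)`; measurability is required with respect to
`μ`, hence also where `w` vanishes. -/
structure MemWeightedL2 {X : Type*} [MeasurableSpace X] (w f : X → ℝ) (μ : Measure X) : Prop where
  aestronglyMeasurable : AEStronglyMeasurable f μ
  integrable_sq_mul : Integrable (fun x => f x ^ 2 * w x) μ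

namespace MemWeightedL2

variable {X : Type*} [MeasurableSpace X] {μ : Measure X} {w f g : X → ℝ}

theorem integrable_mul_mul (hf : MemWeightedL2 w f μ) (hg : MemWeightedL2 w g μ)
    (hw : AEStronglyMeasurable w μ) (hw0 : 0 ≤ᵐ[μ] w) :
    Integrable (fun x => f x * g x * w x) μ := by
  refine (hf.integrable_sq_mul.add hg.integrable_sq_mul).mono'
    ((hf.aestronglyMeasurable.mul hg.aestronglyMeasurable).mul hw) ?_
  filter_upwards [hw0] with x hx
  have hfg : |f x * g x| ≤ f x ^ 2 + g x ^ 2 := by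
    rw [abs_le]
    constructor <;> nlinarith [sq_nonneg (f x + g x), sq_nonneg (f x - g x)]
  calc ‖f x * g x * w x‖ = |f x * g x| * w x := by
        rw [Real.norm_eq_abs, abs_mul, abs_of_nonneg hx]
    _ ≤ (f x ^ 2 + g x ^ 2) * w x := mul_le_mul_of_nonneg_right hfg hx
    _ = f x ^ 2 * w x + g x ^ 2 * w x := add_mul _ _ _

theorem add (hf : MemWeightedL2 w f μ) (hg : MemWeightedL2 w g μ)
    (hw : AEStronglyMeasurable w μ) (hw0 : 0 ≤ᵐ[μ] w) :
    MemWeightedL2 w (fun x => f x + g x) μ where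
  aestronglyMeasurable := hf.aestronglyMeasurable.add hg.aestronglyMeasurable
  integrable_sq_mul := by
    refine ((hf.integrable_sq_mul.add ((hf.integrable_mul_mul hg hw hw0).const_mul 2)).add
      hg.integrable_sq_mul).congr (.of_forall fun x => ?_)
    simp only [Pi.add_apply]
    ring

theorem continuousOn_mul [TopologicalSpace X] [OpensMeasurableSpace X] [T2Space X] {K : Set X}
    (hf : MemWeightedL2 w f (μ.restrict K)) (hg : ContinuousOn g K) (hK : IsCompact K) :
    MemWeightedL2 w (fun x => g x * f x) (μ.restrict K) where
  aestronglyMeasurable :=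
    (hg.aemeasurable hK.measurableSet).aestronglyMeasurable.mul hf.aestronglyMeasurable
  integrable_sq_mul := by
    refine (IntegrableOn.continuousOn_mul (hg.pow 2) hf.integrable_sq_mul hK).congr
      (.of_forall fun x => ?_)
    simp only [Pi.pow_apply]
    ring

theorem intervalIntegrable_mul_mul {a b : ℝ} {w u v : ℝ → ℝ} (hab : a ≤ b)
    (hu : MemWeightedL2 w u (volume.restrict (Set.Icc a b)))
    (hv : MemWeightedL2 w v (volume.restrict (Set.Icc a b)))
    (hw : AEStronglyMeasurable w (volume.restrict (Set.Icc a b)))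
    (hw0 : 0 ≤ᵐ[volume.restrict (Set.Icc a b)] w) :
    IntervalIntegrable (fun x => u x * v x * w x) volume a b :=
  (intervalIntegrable_iff_integrableOn_Icc_of_le hab).2 (hu.integrable_mul_mul hv hw hw0)

end MemWeightedL2

theorem memWeightedL2_of_continuousOn {X : Type*} [MeasurableSpace X] [TopologicalSpace X]
    [OpensMeasurableSpace X] [T2Space X] {μ : Measure X} [IsFiniteMeasureOnCompacts μ]
    {w f : X → ℝ} {K : Set X} (hf : ContinuousOn f K) (hw : ContinuousOn w K) (hK : IsCompact K) :
    MemWeightedL2 w f (μ.restrict K) where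
  aestronglyMeasurable := (hf.aemeasurable hK.measurableSet).aestronglyMeasurable
  integrable_sq_mul := ((hf.pow 2).mul hw).integrableOn_compact hK

section Primitive

variable {a b : ℝ} {u v : ℝ → ℝ}

theorem integral_primitive_mul_eq_neg_integral_mul_primitive
    (hu : IntervalIntegrable u volume a b) (hv : IntervalIntegrable v volume a b) :
    ∫ x in a..b, (∫ y in a..x, u y) * v x = -∫ x in a..b, u x * ∫ y in b..x, v y := by
  have deriv_primitive {f : ℝ → ℝ} {c : ℝ} (hf : IntervalIntegrable f volume a b)
      (hc : c ∈ Set.uIcc a b) :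
      ∀ᵐ x, x ∈ Set.uIoc a b → deriv (fun x => ∫ y in c..x, f y) x = f x := by
    filter_upwards [hf.ae_hasDerivAt_integral] with x hx hxm
    exact (hx (Set.uIoc_subset_uIcc hxm) c hc).deriv
  have hU := hu.absolutelyContinuousOnInterval_intervalIntegral Set.left_mem_uIcc
  have hV := hv.absolutelyContinuousOnInterval_intervalIntegral Set.right_mem_uIcc
  calc ∫ x in a..b, (∫ y in a..x, u y) * v x
      = ∫ x in a..b, (∫ y in a..x, u y) * deriv (fun x => ∫ y in b..x, v y) x := by
        refine intervalIntegral.integral_congr_ae ?_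
        filter_upwards [deriv_primitive hv Set.right_mem_uIcc] with x hx hxm
        rw [hx hxm]
    _ = -∫ x in a..b, deriv (fun x => ∫ y in a..x, u y) x * ∫ y in b..x, v y := by
        rw [hU.integral_mul_deriv_eq_deriv_mul hV]
        simp only [intervalIntegral.integral_same, mul_zero, zero_mul, sub_zero, zero_sub]
    _ = -∫ x in a..b, u x * ∫ y in b..x, v y := by
        congr 1
        refine intervalIntegral.integral_congr_ae ?_
        filter_upwards [deriv_primitive hu Set.left_mem_uIcc] with x hx hxm
        rw [hx hxm]

theorem primitive_eq_zero_of_ae_mul_add_mul_eq_zero {s s' : ℝ → ℝ}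
    (hs : AbsolutelyContinuousOnInterval s a b)
    (hs' : ∀ᵐ x, x ∈ Set.uIcc a b → HasDerivAt s (s' x) x)
    (hs0 : ∀ x ∈ Set.uIcc a b, s x ≠ 0) (hv : IntervalIntegrable v volume a b)
    (hsv : ∀ᵐ x, x ∈ Set.uIcc a b → s' x * (∫ y in b..x, v y) + s x * v x = 0) :
    ∀ x ∈ Set.uIcc a b, ∫ y in b..x, v y = 0 := by
  have hV := hv.absolutelyContinuousOnInterval_intervalIntegral Set.right_mem_uIcc
  obtain ⟨C, hC⟩ : ∃ C, ∀ x ∈ Set.uIcc a b, s x * ∫ y in b..x, v y = C := by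
    refine (hs.fun_mul hV).const_of_ae_hasDerivAt_zero ?_
    filter_upwards [hs', hv.ae_hasDerivAt_integral, hsv] with x hxs hxv hx hxm
    exact ((hxs hxm).mul (hxv hxm b Set.right_mem_uIcc)).congr_deriv (hx hxm)
  have hC0 : C = 0 := by simpa using (hC b Set.right_mem_uIcc).symm
  exact fun x hx => (mul_eq_zero.mp ((hC x hx).trans hC0)).resolve_left (hs0 x hx)

end Primitive

section ConfluentDarboux

/-- The primitive `∫_c^x u v w` of a weighted product; `rhoIntNat` is the case `c = -1`. -/
noncomputable def weightedPrimitive (c : ℝ) (w u v : ℝ → ℝ) (x : ℝ) : ℝ :=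
  ∫ y in c..x, u y * v y * w y

/-- The factor `s = 1 + t ∫_a^x q² w` by which the confluent Darboux transformation at `q` with
parameter `t` multiplies the τ-function. -/
noncomputable def darbouxFactor (a t : ℝ) (w q : ℝ → ℝ) (x : ℝ) : ℝ :=
  1 + t * weightedPrimitive a w q q x

/-- The confluent Darboux transform `w / s²` of the weight `w`. -/
noncomputable def darbouxWeight (a t : ℝ) (w q : ℝ → ℝ) (x : ℝ) : ℝ :=
  w x / darbouxFactor a t w q x ^ 2

/-- The confluent Darboux transform `s u - t (∫_a^x u q w) q` of the function `u`. -/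
noncomputable def darbouxTransform (a t : ℝ) (w q u : ℝ → ℝ) (x : ℝ) : ℝ :=
  darbouxFactor a t w q x * u x - t * weightedPrimitive a w u q x * q x

/-- The adjoint of `darbouxTransform a t w q`, viewed as an operator from `L²([a,b], w)` to
`L²([a,b], darbouxWeight a t w q)`. -/
noncomputable def darbouxAdjoint (a b t : ℝ) (w q h : ℝ → ℝ) (x : ℝ) : ℝ :=
  h x / darbouxFactor a t w q x + t * weightedPrimitive b (darbouxWeight a t w q) h q x * q x

/-- Completeness of the family `p` in `L²([a,b], w)`: only the zero function is orthogonal to every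
`p i`. -/
def IsCompleteFamily {ι : Type*} (a b : ℝ) (w : ℝ → ℝ) (p : ι → ℝ → ℝ) : Prop :=
  ∀ g : ℝ → ℝ, Measurable g → IntegrableOn (fun z => g z ^ 2 * w z) (Set.Icc a b) →
    (∀ i, ∫ z in a..b, g z * p i z * w z = 0) → ∀ᵐ z ∂(volume.restrict (Set.Icc a b)), g z = 0

variable {a b t : ℝ} {w q h u : ℝ → ℝ}

theorem IsCompleteFamily.ae_eq_zero {ι : Type*} {p : ι → ℝ → ℝ} (hp : IsCompleteFamily a b w p)
    (hab : a ≤ b) (hh : MemWeightedL2 w h (volume.restrict (Set.Icc a b)))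
    (horth : ∀ i, ∫ z in a..b, h z * p i z * w z = 0) :
    ∀ᵐ z ∂(volume.restrict (Set.Icc a b)), h z = 0 := by
  obtain ⟨g, hg, hhg⟩ := hh.aestronglyMeasurable.aemeasurable
  have hg0 : ∀ᵐ z ∂(volume.restrict (Set.Icc a b)), g z = 0 := by
    refine hp g hg (hh.integrable_sq_mul.congr ?_) fun i => ?_
    · filter_upwards [hhg] with z hz
      rw [hz]
    · rw [← horth i]
      refine intervalIntegral.integral_congr_ae_restrict ?_
      rw [Set.uIoc_of_le hab]
      filter_upwards [ae_restrict_of_ae_restrict_of_subset Set.Ioc_subset_Icc_self hhg] with z hz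
      rw [hz]
  filter_upwards [hhg, hg0] with z hz hz0
  rw [hz, hz0]

theorem absolutelyContinuousOnInterval_darbouxFactor
    (hq : IntervalIntegrable (fun x => q x * q x * w x) volume a b) :
    AbsolutelyContinuousOnInterval (darbouxFactor a t w q) a b :=
  (contDiffOn_const.absolutelyContinuousOnInterval).add
    ((hq.absolutelyContinuousOnInterval_intervalIntegral Set.left_mem_uIcc).const_mul t)

theorem ae_hasDerivAt_darbouxFactor
    (hq : IntervalIntegrable (fun x => q x * q x * w x) volume a b) :
    ∀ᵐ x, x ∈ Set.uIcc a b → HasDerivAt (darbouxFactor a t w q) (t * (q x * q x * w x)) x := by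
  filter_upwards [hq.ae_hasDerivAt_integral] with x hx hxm
  exact ((hx hxm a Set.left_mem_uIcc).const_mul t).const_add 1

theorem darbouxFactor_pos (hw0 : 0 ≤ᵐ[volume.restrict (Set.Icc a b)] w)
    (hq : IntervalIntegrable (fun x => q x * q x * w x) volume a b)
    (hb : 0 < darbouxFactor a t w q b) {x : ℝ} (hx : x ∈ Set.Icc a b) :
    0 < darbouxFactor a t w q x := by
  have hr0 : 0 ≤ᵐ[volume.restrict (Set.Icc a b)] fun y => q y * q y * w y := by
    filter_upwards [hw0] with y hy using mul_nonneg (mul_self_nonneg _) hy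
  have hnonneg : 0 ≤ weightedPrimitive a w q q x :=
    intervalIntegral.integral_nonneg_of_ae_restrict hx.1
      (ae_restrict_of_ae_restrict_of_subset (Set.Icc_subset_Icc_right hx.2) hr0)
  have hle : weightedPrimitive a w q q x ≤ weightedPrimitive a w q q b :=
    intervalIntegral.integral_mono_interval le_rfl hx.1 hx.2
      (ae_restrict_of_ae_restrict_of_subset Set.Ioc_subset_Icc_self hr0) hq
  rcases le_total 0 t with ht | ht
  · exact add_pos_of_pos_of_nonneg one_pos (mul_nonneg ht hnonneg)
  · exact hb.trans_le (add_le_add_right (mul_le_mul_of_nonpos_left hle ht) 1)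

theorem MemWeightedL2.div_darbouxFactor
    (hh : MemWeightedL2 (darbouxWeight a t w q) h (volume.restrict (Set.Icc a b)))
    (hs : ContinuousOn (darbouxFactor a t w q) (Set.Icc a b)) :
    MemWeightedL2 w (fun x => h x / darbouxFactor a t w q x) (volume.restrict (Set.Icc a b)) where
  aestronglyMeasurable := (hh.aestronglyMeasurable.aemeasurable.div
    (hs.aemeasurable measurableSet_Icc)).aestronglyMeasurable
  integrable_sq_mul := hh.integrable_sq_mul.congr (.of_forall fun x => by
    simp only [darbouxWeight, div_pow, mul_div_assoc', div_mul_eq_mul_div])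

theorem intervalIntegrable_mul_mul_darbouxWeight
    (hq : IntervalIntegrable (fun x => q x * q x * w x) volume a b)
    (hs0 : ∀ x ∈ Set.uIcc a b, darbouxFactor a t w q x ≠ 0)
    (hhu : IntervalIntegrable (fun x => h x / darbouxFactor a t w q x * u x * w x) volume a b) :
    IntervalIntegrable (fun x => h x * u x * darbouxWeight a t w q x) volume a b := by
  have hs := (absolutelyContinuousOnInterval_darbouxFactor (t := t) hq).continuousOn
  refine (hhu.mul_continuousOn (hs.inv₀ hs0)).congr fun x _ => ?_
  simp only [darbouxWeight, Pi.inv_apply]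
  ring

theorem memWeightedL2_darbouxAdjoint (hab : a ≤ b)
    (hw : AEStronglyMeasurable w (volume.restrict (Set.Icc a b)))
    (hw0 : 0 ≤ᵐ[volume.restrict (Set.Icc a b)] w)
    (hq : MemWeightedL2 w q (volume.restrict (Set.Icc a b)))
    (hh : MemWeightedL2 w (fun x => h x / darbouxFactor a t w q x)
      (volume.restrict (Set.Icc a b)))
    (hhq : IntervalIntegrable (fun x => h x * q x * darbouxWeight a t w q x) volume a b) :
    MemWeightedL2 w (darbouxAdjoint a b t w q h) (volume.restrict (Set.Icc a b)) := by
  have hΦ : ContinuousOn (weightedPrimitive b (darbouxWeight a t w q) h q) (Set.Icc a b) :=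
    Set.uIcc_of_le hab ▸
      intervalIntegral.continuousOn_primitive_interval' hhq Set.right_mem_uIcc
  exact hh.add (hq.continuousOn_mul (hΦ.const_mul t) isCompact_Icc) hw hw0

theorem integral_darbouxAdjoint_mul
    (hs0 : ∀ x ∈ Set.uIcc a b, darbouxFactor a t w q x ≠ 0)
    (hhu : IntervalIntegrable (fun x => h x / darbouxFactor a t w q x * u x * w x) volume a b)
    (huq : IntervalIntegrable (fun x => u x * q x * w x) volume a b)
    (hhq : IntervalIntegrable (fun x => h x * q x * darbouxWeight a t w q x) volume a b) :
    ∫ x in a..b, darbouxAdjoint a b t w q h x * u x * w x =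
      ∫ x in a..b, h x * darbouxTransform a t w q u x * darbouxWeight a t w q x := by
  set s := darbouxFactor a t w q with hs
  set W := darbouxWeight a t w q with hW
  set ρ := weightedPrimitive a w u q with hρ
  set Φ := weightedPrimitive b W h q with hΦ
  have hΦint : IntervalIntegrable (fun x => u x * q x * w x * Φ x) volume a b :=
    huq.mul_continuousOn
      (intervalIntegral.continuousOn_primitive_interval' hhq Set.right_mem_uIcc)
  have hρint : IntervalIntegrable (fun x => ρ x * (h x * q x * W x)) volume a b :=
    hhq.continuousOn_mul
      (intervalIntegral.continuousOn_primitive_interval' huq Set.left_mem_uIcc)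
  have hparts : ∫ x in a..b, ρ x * (h x * q x * W x) = -∫ x in a..b, u x * q x * w x * Φ x :=
    integral_primitive_mul_eq_neg_integral_mul_primitive huq hhq
  calc ∫ x in a..b, darbouxAdjoint a b t w q h x * u x * w x
      = ∫ x in a..b, (h x / s x * u x * w x + t * (u x * q x * w x * Φ x)) :=
        intervalIntegral.integral_congr fun x _ => by
          simp only [darbouxAdjoint, ← hs, ← hW, ← hΦ]
          ring
    _ = (∫ x in a..b, h x / s x * u x * w x) - t * ∫ x in a..b, ρ x * (h x * q x * W x) := by
        rw [intervalIntegral.integral_add hhu (hΦint.const_mul t),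
          intervalIntegral.integral_const_mul, hparts]
        ring
    _ = ∫ x in a..b, (h x / s x * u x * w x - t * (ρ x * (h x * q x * W x))) := by
        rw [intervalIntegral.integral_sub hhu (hρint.const_mul t),
          intervalIntegral.integral_const_mul]
    _ = ∫ x in a..b, h x * darbouxTransform a t w q u x * W x := by
        refine intervalIntegral.integral_congr fun x hx => ?_
        have hsx : s x ≠ 0 := hs0 x hx
        simp only [darbouxTransform, hW, darbouxWeight, ← hs, ← hρ]
        field_simp

theorem ae_eq_zero_of_darbouxAdjoint_ae_eq_zero
    (hs0 : ∀ x ∈ Set.uIcc a b, darbouxFactor a t w q x ≠ 0)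
    (hq : IntervalIntegrable (fun x => q x * q x * w x) volume a b)
    (hhq : IntervalIntegrable (fun x => h x * q x * darbouxWeight a t w q x) volume a b)
    (hadj : ∀ᵐ x ∂(volume.restrict (Set.uIcc a b)), darbouxAdjoint a b t w q h x = 0) :
    ∀ᵐ x ∂(volume.restrict (Set.uIcc a b)), h x = 0 := by
  set s := darbouxFactor a t w q with hs
  set Φ := weightedPrimitive b (darbouxWeight a t w q) h q with hΦ
  have hode : ∀ᵐ x, x ∈ Set.uIcc a b →
      t * (q x * q x * w x) * Φ x + s x * (h x * q x * darbouxWeight a t w q x) = 0 := by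
    filter_upwards [(ae_restrict_iff' measurableSet_uIcc).1 hadj] with x hx hxm
    have hsx : s x ≠ 0 := hs0 x hxm
    calc t * (q x * q x * w x) * Φ x + s x * (h x * q x * darbouxWeight a t w q x)
        = darbouxAdjoint a b t w q h x * (q x * w x) := by
          simp only [darbouxAdjoint, darbouxWeight, ← hs, ← hΦ]
          field_simp
          ring
      _ = 0 := by rw [hx hxm, zero_mul]
  have hΦ0 : ∀ x ∈ Set.uIcc a b, Φ x = 0 :=
    primitive_eq_zero_of_ae_mul_add_mul_eq_zero (absolutelyContinuousOnInterval_darbouxFactor hq)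
      (ae_hasDerivAt_darbouxFactor hq) hs0 hhq hode
  filter_upwards [hadj, ae_restrict_mem measurableSet_uIcc] with x hx hxm
  rw [darbouxAdjoint, ← hΦ, hΦ0 x hxm, mul_zero, zero_mul, add_zero] at hx
  exact (div_eq_zero_iff.mp hx).resolve_right (hs0 x hxm)

theorem statement16_general {ι : Type*} {p : ι → ℝ → ℝ} {m : ι} (hab : a ≤ b)
    (hw : AEStronglyMeasurable w (volume.restrict (Set.Icc a b)))
    (hw0 : 0 ≤ᵐ[volume.restrict (Set.Icc a b)] w)
    (hp : ∀ i, MemWeightedL2 w (p i) (volume.restrict (Set.Icc a b)))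
    (hcomplete : IsCompleteFamily a b w p) (hb : 0 < darbouxFactor a t w (p m) b) :
    IsCompleteFamily a b (darbouxWeight a t w (p m))
      fun i => darbouxTransform a t w (p m) (p i) := by
  intro h hmeas hint horth
  have hI : Set.uIcc a b = Set.Icc a b := Set.uIcc_of_le hab
  have hpp (i : ι) : IntervalIntegrable (fun x => p i x * p m x * w x) volume a b :=
    (hp i).intervalIntegrable_mul_mul hab (hp m) hw hw0
  have hs0 : ∀ x ∈ Set.uIcc a b, darbouxFactor a t w (p m) x ≠ 0 := fun x hx =>
    (darbouxFactor_pos hw0 (hpp m) hb (hI ▸ hx)).ne'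
  have hhs : MemWeightedL2 w (fun x => h x / darbouxFactor a t w (p m) x)
      (volume.restrict (Set.Icc a b)) :=
    MemWeightedL2.div_darbouxFactor ⟨hmeas.aestronglyMeasurable, hint⟩
      (hI ▸ (absolutelyContinuousOnInterval_darbouxFactor (hpp m)).continuousOn)
  have hhp (i : ι) := hhs.intervalIntegrable_mul_mul hab (hp i) hw hw0
  have hhq := intervalIntegrable_mul_mul_darbouxWeight (hpp m) hs0 (hhp m)
  have hadj : ∀ᵐ x ∂(volume.restrict (Set.Icc a b)), darbouxAdjoint a b t w (p m) h x = 0 :=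
    hcomplete.ae_eq_zero hab (memWeightedL2_darbouxAdjoint hab hw hw0 (hp m) hhs hhq) fun i =>
      (integral_darbouxAdjoint_mul hs0 (hhp i) (hpp i) hhq).trans (horth i)
  rw [← hI] at hadj ⊢
  exact ae_eq_zero_of_darbouxAdjoint_ae_eq_zero hs0 (hpp m) hhq hadj

end ConfluentDarboux

theorem continuousOn_gegenWeightNat {ℓ : ℕ} {τ : Polynomial ℝ} {S : Set ℝ}
    (hτ : ∀ z ∈ S, τ.eval z ≠ 0) : ContinuousOn (gegenWeightNat ℓ τ) S :=
  ContinuousOn.div (by fun_prop) (by fun_prop) fun z hz => pow_ne_zero 2 (hτ z hz)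

theorem gegenWeightNat_nonneg {ℓ : ℕ} {τ : Polynomial ℝ} {z : ℝ} (hz : z ∈ Set.Icc (-1 : ℝ) 1) :
    0 ≤ gegenWeightNat ℓ τ z :=
  div_nonneg (pow_nonneg (by nlinarith [hz.1, hz.2]) ℓ) (sq_nonneg _)

theorem gegenWeightCDTNat_eq_darbouxWeight (ℓ : ℕ) (τ : Polynomial ℝ) (π : ℕ → Polynomial ℝ)
    (m : ℕ) (t : ℝ) :
    gegenWeightCDTNat ℓ τ π m t =
      darbouxWeight (-1) t (gegenWeightNat ℓ τ) fun z => (π m).eval z := by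
  funext z
  rw [gegenWeightCDTNat, tauCDTNat, mul_pow, ← div_div]
  rfl

/-- a confluent Darboux transformation preserves completeness.
If `{π_i}` is an orthogonal family, complete for the weight `W^{(α)}_τ` on
`[-1,1]` (`α = ℓ + 1/2`), and `1 + tν_m > 0`, then the transformed family
`{π_{m;i}}` is complete for the transformed weight `W^{(α)}_{τ_m}`. -/
theorem statement16 (ℓ : ℕ) (t : ℝ) (τ : Polynomial ℝ) (π : ℕ → Polynomial ℝ) (m : ℕ)
    (hτpos : ∀ z ∈ Set.Icc (-1 : ℝ) 1, 0 < τ.eval z)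
    (horth : ∀ i j : ℕ, i ≠ j →
      (∫ z in (-1 : ℝ)..1, (π i).eval z * (π j).eval z * gegenWeightNat ℓ τ z) = 0)
    (hnorm : ∀ i : ℕ,
      0 < ∫ z in (-1 : ℝ)..1, ((π i).eval z) ^ 2 * gegenWeightNat ℓ τ z)
    (hcomplete : ∀ g : ℝ → ℝ, Measurable g →
      IntegrableOn (fun z => (g z) ^ 2 * gegenWeightNat ℓ τ z) (Set.Icc (-1 : ℝ) 1) →
      (∀ i : ℕ,
        (∫ z in (-1 : ℝ)..1, g z * (π i).eval z * gegenWeightNat ℓ τ z) = 0) →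
      ∀ᵐ z ∂(volume.restrict (Set.Icc (-1 : ℝ) 1)), g z = 0)
    (hm : 0 < 1 + t * rhoIntNat ℓ τ π m m 1) :
    ∀ h : ℝ → ℝ, Measurable h →
      IntegrableOn (fun z => (h z) ^ 2 * gegenWeightCDTNat ℓ τ π m t z)
        (Set.Icc (-1 : ℝ) 1) →
      (∀ i : ℕ,
        (∫ z in (-1 : ℝ)..1, h z * piCDTNat ℓ τ π m i t z
          * gegenWeightCDTNat ℓ τ π m t z) = 0) →
      ∀ᵐ z ∂(volume.restrict (Set.Icc (-1 : ℝ) 1)), h z = 0 := by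
  have hw := continuousOn_gegenWeightNat (ℓ := ℓ) fun z hz => (hτpos z hz).ne'
  rw [gegenWeightCDTNat_eq_darbouxWeight]
  exact statement16_general (p := fun i z => (π i).eval z) (by norm_num)
    (hw.aestronglyMeasurable measurableSet_Icc)
    (ae_restrict_of_forall_mem measurableSet_Icc fun _ => gegenWeightNat_nonneg)
    (fun i => memWeightedL2_of_continuousOn (π i).continuousOn hw isCompact_Icc) hcomplete hm
end
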